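/- arXiv:math/0104011 — 2 statements merged into one kernel-verified Lean document; each statement's English description precedes it below -/
import Mathlib

section
/- Let m, n ≥ 1. Then ∑_P (−1)^{v(P)} = ε_{m,n} · T(m,n), where the sum runs over all perfect matchings P of the grid graph G(m,n) and v(P) denotes the number of vertical edges of P. (Weighting every vertical edge by −1 changes the matching count of the m-by-n grid by exactly the factor ε_{m,n}.) -/
open Finset

/-- The m-by-n grid graph on `Fin m × Fin n`: vertices are adjacent iff they agree in
one coordinate and differ by exactly 1 in the other. -/
def grid (m n : ℕ) : SimpleGraph (Fin m × Fin n) :=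
  SimpleGraph.fromRel (fun p q =>
    (p.1 = q.1 ∧ (p.2 : ℕ) + 1 = q.2) ∨ (p.2 = q.2 ∧ (p.1 : ℕ) + 1 = q.1))

/-- A perfect matching: a set of edges of `G` such that every vertex belongs to
exactly one edge of the set. -/
def IsPM {V : Type*} (G : SimpleGraph V) (P : Finset (Sym2 V)) : Prop :=
  (∀ e ∈ P, e ∈ G.edgeSet) ∧ ∀ v : V, ∃! e, e ∈ P ∧ v ∈ e

/-- `T m n` is the number of perfect matchings of the m-by-n grid graph. -/
noncomputable def T (m n : ℕ) : ℕ :=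
  {P : Finset (Sym2 (Fin m × Fin n)) | IsPM (grid m n) P}.ncard

open scoped Classical in
/-- The finset of all perfect matchings of a graph on a finite vertex type. -/
noncomputable def pmFinset {V : Type*} [Fintype V] [DecidableEq V]
    (G : SimpleGraph V) : Finset (Finset (Sym2 V)) :=
  Finset.univ.filter (fun P => IsPM G P)

open scoped Classical in
/-- The number of vertical edges in `P` (edges whose endpoints differ in the
first, i.e. row, coordinate). -/
noncomputable def vert {m n : ℕ} (P : Finset (Sym2 (Fin m × Fin n))) : ℕ :=
  (P.filter (fun e => ∃ p q : Fin m × Fin n, e = s(p, q) ∧ p.1 ≠ q.1)).card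

/-- The underlying graph of the signed graph `G(m,-k)`: all horizontal edges, and
vertical edges only in columns 1 through k (0-indexed). -/
def negGrid (m k : ℕ) : SimpleGraph (Fin m × Fin (k + 2)) :=
  SimpleGraph.fromRel (fun p q =>
    (p.1 = q.1 ∧ (p.2 : ℕ) + 1 = q.2) ∨
    (p.2 = q.2 ∧ (p.1 : ℕ) + 1 = q.1 ∧ 1 ≤ (p.2 : ℕ) ∧ (p.2 : ℕ) ≤ k))

/-- The signed number of matchings `M(G(m,-k))`: every vertical edge has weight -1,
every horizontal edge weight +1. -/
noncomputable def Msigned (m k : ℕ) : ℤ :=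
  ∑ P ∈ pmFinset (negGrid m k), (-1 : ℤ) ^ vert P

/-- ε_{m,n}: -1 if m ≡ 2 (mod 4) and n is odd, +1 otherwise. -/
def eps (m n : ℕ) : ℤ := if m % 4 = 2 ∧ Odd n then -1 else 1

theorem aux_sum {V : Type*} [Fintype V] [DecidableEq V] (G : SimpleGraph V) (P : Finset (Sym2 V))
    (hP : IsPM G P) (f : V → ℕ) :
    ∑ v, f v = ∑ e ∈ P, ∑ v, if v ∈ e then f v else 0 := by
  rw [Finset.sum_comm]
  refine Finset.sum_congr rfl fun v _ => ?_
  obtain ⟨e, ⟨he, hv⟩, hu⟩ := hP.2 v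
  rw [Finset.sum_eq_single e]
  · simp [hv]
  · intro b hb hne
    rw [if_neg]
    intro h
    exact hne (hu b ⟨hb, h⟩)
  · exact fun h => absurd he h

theorem aux_edge {V : Type*} [Fintype V] [DecidableEq V] (p q : V) (h : p ≠ q) (f : V → ℕ) :
    (∑ v, if v ∈ s(p, q) then f v else 0) = f p + f q := by
  rw [← Finset.sum_filter]
  have : (Finset.univ.filter fun v => v ∈ s(p, q)) = {p, q} := by
    ext v; simp
  rw [this, Finset.sum_pair h]

theorem aux_range (m : ℕ) : ∑ i ∈ Finset.range m, i % 2 = m / 2 := by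
  induction m with
  | zero => simp
  | succ k ih => rw [Finset.sum_range_succ, ih]; omega

open scoped Classical in
theorem aux_vert (m n : ℕ) (P : Finset (Sym2 (Fin m × Fin n))) (hP : IsPM (grid m n) P) :
    (vert P) % 2 = (m / 2 * n) % 2 := by
  have h1 := aux_sum _ P hP (fun v => (v.1 : ℕ) % 2)
  have h2 : ∑ v : Fin m × Fin n, (v.1 : ℕ) % 2 = m / 2 * n := by
    rw [Fintype.sum_prod_type]
    simp only [Finset.sum_const, Finset.card_univ, Fintype.card_fin, smul_eq_mul]
    rw [← Finset.mul_sum, Fin.sum_univ_eq_sum_range (fun i => i % 2), aux_range, mul_comm]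
  rw [← h2, h1, vert, Finset.card_filter, Finset.sum_nat_mod, Finset.sum_nat_mod (s := P)
    (f := fun e => ∑ v : Fin m × Fin n, if v ∈ e then (v.1 : ℕ) % 2 else 0)]
  congr 1
  refine Finset.sum_congr rfl fun e he => ?_
  have hadj := hP.1 e he
  induction e using Sym2.ind with
  | _ p q =>
    rw [SimpleGraph.mem_edgeSet] at hadj
    rw [aux_edge p q hadj.ne]
    have hiff : (∃ p' q' : Fin m × Fin n, s(p, q) = s(p', q') ∧ p'.1 ≠ q'.1) ↔ p.1 ≠ q.1 := by
      constructor
      · rintro ⟨a, b, hab, hne⟩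
        rcases Sym2.eq_iff.1 hab with ⟨rfl, rfl⟩ | ⟨rfl, rfl⟩
        · exact hne
        · exact hne.symm
      · exact fun h => ⟨p, q, rfl, h⟩
    rw [if_congr hiff rfl rfl]
    simp only [grid, SimpleGraph.fromRel_adj] at hadj
    simp only [ne_eq, Fin.ext_iff] at hadj ⊢
    split_ifs <;> omega

open scoped Classical in
theorem aux_even (m n : ℕ) (P : Finset (Sym2 (Fin m × Fin n))) (hP : IsPM (grid m n) P) :
    Even (m * n) := by
  have h1 := aux_sum _ P hP (fun _ => 1)
  have h2 : ∀ e ∈ P, (∑ v : Fin m × Fin n, if v ∈ e then 1 else 0) = 2 := by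
    intro e he
    have hadj := hP.1 e he
    induction e using Sym2.ind with
    | _ p q =>
      rw [SimpleGraph.mem_edgeSet] at hadj
      exact aux_edge p q hadj.ne (fun _ => 1)
  rw [Finset.sum_congr rfl h2] at h1
  simp at h1
  rw [h1]; simp

/-- Weighting every vertical edge by −1 changes the matching count of the m-by-n
grid by exactly the factor ε_{m,n}. -/
theorem signed_count_of_grid (m n : ℕ) (hm : 1 ≤ m) (hn : 1 ≤ n) :
    ∑ P ∈ pmFinset (grid m n), (-1 : ℤ) ^ vert P = eps m n * (T m n : ℤ) := by
  have hT : T m n = (pmFinset (grid m n)).card := by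
    rw [T, pmFinset, ← Set.ncard_coe_finset]
    simp
  have hall : ∀ P ∈ pmFinset (grid m n), (-1 : ℤ) ^ vert P = eps m n := by
    intro P hP
    have hP' : IsPM (grid m n) P := by simpa [pmFinset] using hP
    have hv := aux_vert m n P hP'
    have he := aux_even m n P hP'
    rw [Nat.even_mul] at he
    rw [neg_one_pow_eq_pow_mod_two, hv, ← neg_one_pow_eq_pow_mod_two, eps]
    split_ifs with h
    · apply Odd.neg_one_pow
      exact Nat.odd_mul.2 ⟨by rw [Nat.odd_iff]; omega, h.2⟩
    · apply Even.neg_one_pow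
      rw [Nat.even_mul]
      rcases Nat.even_or_odd n with hn | hn
      · exact Or.inr hn
      · left
        have h3 : Even m := he.resolve_right (by simpa using hn)
        have h4 : m % 4 ≠ 2 := fun h' => h ⟨h', hn⟩
        rw [Nat.even_iff] at h3 ⊢
        omega
  rw [Finset.sum_congr rfl hall, hT]
  simp [mul_comm]
end

section
/- For every m ≥ 1 and n ≥ 0, the signed number of matchings of G(m,−(2+n)) equals ε_{m,n} · T(m,n): M(G(m,−(2+n))) = ε_{m,n} · T(m,n). (This identifies the extrapolated tiling count T(m,−2−n) combinatorially as a signed matching count and establishes the reciprocity relation.) -/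
open Finset

lemma sum_pm {V : Type*} [Fintype V] [DecidableEq V] (G : SimpleGraph V)
    (P : Finset (Sym2 V)) (hP : IsPM G P) (f : V → ZMod 2) (g : Sym2 V → ZMod 2)
    (hg : ∀ p q, G.Adj p q → g s(p, q) = f p + f q) :
    ∑ v, f v = ∑ e ∈ P, g e := by
  classical
  have h1 : ∀ v, f v = ∑ e ∈ P, if v ∈ e then f v else 0 := by
    intro v
    obtain ⟨e, ⟨he, hv⟩, hu⟩ := hP.2 v
    rw [Finset.sum_eq_single_of_mem e he]
    · simp [hv]
    · intro b hb hbe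
      rw [if_neg]
      intro hvb
      exact hbe (hu b ⟨hb, hvb⟩)
  rw [Finset.sum_congr rfl (fun v _ => h1 v), Finset.sum_comm]
  refine Finset.sum_congr rfl fun e he => ?_
  have hE := hP.1 e he
  induction e with | _ p q
  rw [SimpleGraph.mem_edgeSet] at hE
  rw [hg p q hE, ← Finset.sum_filter]
  have : (Finset.univ.filter fun v => v ∈ s(p, q)) = {p, q} := by
    ext v; simp
  rw [this, Finset.sum_pair hE.ne]

lemma parity {m N : ℕ} (G : SimpleGraph (Fin m × Fin N))
    (hG : ∀ p q, G.Adj p q → p.1 = q.1 ∨ (p.1 : ℕ) + 1 = q.1 ∨ (q.1 : ℕ) + 1 = p.1)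
    (P : Finset (Sym2 (Fin m × Fin N))) (hP : IsPM G P) :
    Even (m * N) ∧ ((vert P : ℕ) : ZMod 2) = ((N * (m * (m - 1) / 2) : ℕ) : ZMod 2) := by
  classical
  constructor
  · have := sum_pm G P hP (fun _ => 1) (fun _ => 0) (by intros; decide)
    simp at this
    rw [← ZMod.natCast_eq_zero_iff_even]
    push_cast; simpa using this
  · have := sum_pm G P hP (fun p => ((p.1 : ℕ) : ZMod 2))
      (fun e => if (∃ p q : Fin m × Fin N, e = s(p, q) ∧ p.1 ≠ q.1) then 1 else 0) (by
        intro p q h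
        have key : (∃ p' q' : Fin m × Fin N, s(p, q) = s(p', q') ∧ p'.1 ≠ q'.1) ↔ p.1 ≠ q.1 := by
          constructor
          · rintro ⟨p', q', h1, h2⟩
            rw [Sym2.eq_iff] at h1
            rcases h1 with ⟨rfl, rfl⟩ | ⟨rfl, rfl⟩
            · exact h2
            · exact h2.symm
          · intro h; exact ⟨p, q, rfl, h⟩
        simp only [key]
        rcases hG p q h with h | h | h
        · simp [h, CharTwo.add_self_eq_zero]
        · have h' : p.1 ≠ q.1 := by intro h2; rw [h2] at h; omega
          rw [if_pos h', ← h]; push_cast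
          rw [← add_assoc, CharTwo.add_self_eq_zero, zero_add]
        · have h' : p.1 ≠ q.1 := by intro h2; rw [h2] at h; omega
          rw [if_pos h', ← h]; push_cast
          rw [add_right_comm, CharTwo.add_self_eq_zero, zero_add])
    rw [← Finset.sum_filter] at this
    simp only [Finset.sum_const, nsmul_eq_mul, mul_one] at this
    unfold vert
    rw [← this, Fintype.sum_prod_type]
    simp only [Finset.sum_const, Finset.card_univ, Fintype.card_fin, nsmul_eq_mul]
    rw [← Finset.mul_sum, ← Finset.sum_range_id, Finset.sum_range]
    push_cast
    rfl

lemma negAdj {m k : ℕ} (p q : Fin m × Fin (k + 2)) : (negGrid m k).Adj p q ↔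
    ((p.1 : ℕ) = q.1 ∧ ((p.2 : ℕ) + 1 = q.2 ∨ (q.2 : ℕ) + 1 = p.2)) ∨
    ((p.2 : ℕ) = q.2 ∧ 1 ≤ (p.2 : ℕ) ∧ (p.2 : ℕ) ≤ k ∧
      ((p.1 : ℕ) + 1 = q.1 ∨ (q.1 : ℕ) + 1 = p.1)) := by
  obtain ⟨a, b⟩ := p
  obtain ⟨c, d⟩ := q
  simp only [negGrid, SimpleGraph.fromRel_adj, ne_eq, Prod.mk.injEq, Fin.ext_iff]
  omega

lemma gridAdj {m n : ℕ} (p q : Fin m × Fin n) : (grid m n).Adj p q ↔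
    ((p.1 : ℕ) = q.1 ∧ ((p.2 : ℕ) + 1 = q.2 ∨ (q.2 : ℕ) + 1 = p.2)) ∨
    ((p.2 : ℕ) = q.2 ∧ ((p.1 : ℕ) + 1 = q.1 ∨ (q.1 : ℕ) + 1 = p.1)) := by
  obtain ⟨a, b⟩ := p
  obtain ⟨c, d⟩ := q
  simp only [grid, SimpleGraph.fromRel_adj, ne_eq, Prod.mk.injEq, Fin.ext_iff]
  omega

def shf (m n : ℕ) (p : Fin m × Fin n) : Fin m × Fin (2 + n + 2) :=
  (p.1, ⟨p.2 + 2, by omega⟩)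

lemma shf_inj (m n : ℕ) : Function.Injective (shf m n) := by
  rintro ⟨a, b⟩ ⟨c, d⟩ h
  simp only [shf, Prod.mk.injEq, Fin.ext_iff] at h ⊢
  omega

lemma shf_adj {m n : ℕ} (p q : Fin m × Fin n) :
    (negGrid m (2 + n)).Adj (shf m n p) (shf m n q) ↔ (grid m n).Adj p q := by
  rw [negAdj, gridAdj]
  simp only [shf]
  omega

lemma shf_surj {m n : ℕ} (p : Fin m × Fin (2 + n + 2)) (h1 : 2 ≤ (p.2 : ℕ))
    (h2 : (p.2 : ℕ) < n + 2) : ∃ q, shf m n q = p := by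
  refine ⟨(p.1, ⟨p.2 - 2, by omega⟩), ?_⟩
  obtain ⟨a, b⟩ := p
  simp only [shf, Prod.mk.injEq, Fin.ext_iff, true_and]
  simp only at h1
  omega

def lE (m n : ℕ) (i : Fin m) : Sym2 (Fin m × Fin (2 + n + 2)) :=
  s((i, ⟨0, by omega⟩), (i, ⟨1, by omega⟩))

def rE (m n : ℕ) (i : Fin m) : Sym2 (Fin m × Fin (2 + n + 2)) :=
  s((i, ⟨n + 2, by omega⟩), (i, ⟨n + 3, by omega⟩))

lemma mem_lE {m n : ℕ} {i : Fin m} {v : Fin m × Fin (2 + n + 2)} :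
    v ∈ lE m n i ↔ v.1 = i ∧ (v.2 : ℕ) ≤ 1 := by
  obtain ⟨a, b⟩ := v
  simp only [lE, Sym2.mem_iff, Prod.mk.injEq, Fin.ext_iff]
  omega

lemma mem_rE {m n : ℕ} {i : Fin m} {v : Fin m × Fin (2 + n + 2)} :
    v ∈ rE m n i ↔ v.1 = i ∧ n + 2 ≤ (v.2 : ℕ) := by
  obtain ⟨a, b⟩ := v
  simp only [rE, Sym2.mem_iff, Prod.mk.injEq, Fin.ext_iff]
  omega

lemma mem_map_shf {m n : ℕ} {e : Sym2 (Fin m × Fin n)} {v : Fin m × Fin (2 + n + 2)}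
    (h : v ∈ Sym2.map (shf m n) e) : 2 ≤ (v.2 : ℕ) ∧ (v.2 : ℕ) < n + 2 := by
  rw [Sym2.mem_map] at h
  obtain ⟨a, _, rfl⟩ := h
  simp only [shf]
  omega

lemma lE_mem {m n : ℕ} {Q : Finset (Sym2 (Fin m × Fin (2 + n + 2)))}
    (hQ : IsPM (negGrid m (2 + n)) Q) (i : Fin m) : lE m n i ∈ Q := by
  obtain ⟨e, ⟨he, hv⟩, -⟩ := hQ.2 (i, ⟨0, by omega⟩)
  obtain ⟨w, rfl⟩ := hv
  have := hQ.1 _ he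
  rw [SimpleGraph.mem_edgeSet, negAdj] at this
  have hw : w = (i, ⟨1, by omega⟩) := by
    obtain ⟨a, b⟩ := w
    simp only [Prod.mk.injEq, Fin.ext_iff] at this ⊢
    omega
  rw [hw] at he
  exact he

lemma rE_mem {m n : ℕ} {Q : Finset (Sym2 (Fin m × Fin (2 + n + 2)))}
    (hQ : IsPM (negGrid m (2 + n)) Q) (i : Fin m) : rE m n i ∈ Q := by
  obtain ⟨e, ⟨he, hv⟩, -⟩ := hQ.2 (i, ⟨n + 3, by omega⟩)
  obtain ⟨w, rfl⟩ := hv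
  have := hQ.1 _ he
  rw [SimpleGraph.mem_edgeSet, negAdj] at this
  have hw : w = (i, ⟨n + 2, by omega⟩) := by
    obtain ⟨a, b⟩ := w
    simp only [Prod.mk.injEq, Fin.ext_iff] at this ⊢
    omega
  rw [hw, Sym2.eq_swap] at he
  exact he

lemma classify {m n : ℕ} {Q : Finset (Sym2 (Fin m × Fin (2 + n + 2)))}
    (hQ : IsPM (negGrid m (2 + n)) Q) {e} (he : e ∈ Q) :
    (∃ i, lE m n i = e) ∨ (∃ i, rE m n i = e) ∨ ∃ e', Sym2.map (shf m n) e' = e := by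
  have hl : ∀ v ∈ e, (v.2 : ℕ) ≤ 1 → (∃ i, lE m n i = e) := fun v hv h =>
    ⟨v.1, (hQ.2 v).unique ⟨lE_mem hQ v.1, mem_lE.2 ⟨rfl, h⟩⟩ ⟨he, hv⟩⟩
  have hr : ∀ v ∈ e, n + 2 ≤ (v.2 : ℕ) → (∃ i, rE m n i = e) := fun v hv h =>
    ⟨v.1, (hQ.2 v).unique ⟨rE_mem hQ v.1, mem_rE.2 ⟨rfl, h⟩⟩ ⟨he, hv⟩⟩
  by_cases h1 : ∃ v ∈ e, (v.2 : ℕ) ≤ 1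
  · obtain ⟨v, hv, h⟩ := h1
    exact Or.inl (hl v hv h)
  by_cases h2 : ∃ v ∈ e, n + 2 ≤ (v.2 : ℕ)
  · obtain ⟨v, hv, h⟩ := h2
    exact Or.inr (Or.inl (hr v hv h))
  refine Or.inr (Or.inr ?_)
  push Not at h1 h2
  induction e with | _ p q
  obtain ⟨p', hp⟩ := shf_surj p (h1 p (Sym2.mem_mk_left p q)) (h2 p (Sym2.mem_mk_left p q))
  obtain ⟨q', hq⟩ := shf_surj q (h1 q (Sym2.mem_mk_right p q)) (h2 q (Sym2.mem_mk_right p q))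
  exact ⟨s(p', q'), by rw [Sym2.map_mk, hp, hq]⟩

lemma map_edge {m n : ℕ} (e : Sym2 (Fin m × Fin n)) :
    Sym2.map (shf m n) e ∈ (negGrid m (2 + n)).edgeSet ↔ e ∈ (grid m n).edgeSet := by
  induction e with | _ p q
  simp only [Sym2.map_mk, SimpleGraph.mem_edgeSet, shf_adj]

open scoped Classical in
noncomputable def ext' (m n : ℕ) (P : Finset (Sym2 (Fin m × Fin n))) :
    Finset (Sym2 (Fin m × Fin (2 + n + 2))) :=
  Finset.univ.filter fun e => (∃ i, lE m n i = e) ∨ (∃ i, rE m n i = e) ∨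
    ∃ e' ∈ P, Sym2.map (shf m n) e' = e

open scoped Classical in
noncomputable def res (m n : ℕ) (Q : Finset (Sym2 (Fin m × Fin (2 + n + 2)))) :
    Finset (Sym2 (Fin m × Fin n)) :=
  Finset.univ.filter fun e => Sym2.map (shf m n) e ∈ Q

lemma map_ne_l {m n : ℕ} (e : Sym2 (Fin m × Fin n)) (i) : lE m n i ≠ Sym2.map (shf m n) e := by
  intro h
  have : ((i, ⟨0, by omega⟩) : Fin m × Fin (2 + n + 2)) ∈ lE m n i := mem_lE.2 ⟨rfl, by simp⟩
  rw [h] at this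
  have := mem_map_shf this
  simp at this

lemma map_ne_r {m n : ℕ} (e : Sym2 (Fin m × Fin n)) (i) : rE m n i ≠ Sym2.map (shf m n) e := by
  intro h
  have : ((i, ⟨n + 2, by omega⟩) : Fin m × Fin (2 + n + 2)) ∈ rE m n i := mem_rE.2 ⟨rfl, by simp⟩
  rw [h] at this
  have := mem_map_shf this
  simp at this

lemma res_ext (m n : ℕ) (P : Finset (Sym2 (Fin m × Fin n))) : res m n (ext' m n P) = P := by
  ext e
  simp only [res, ext', Finset.mem_filter, Finset.mem_univ, true_and]
  constructor
  · rintro (⟨i, h⟩ | ⟨i, h⟩ | ⟨e', h, h'⟩)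
    · exact (map_ne_l _ _ h).elim
    · exact (map_ne_r _ _ h).elim
    · rwa [← Sym2.map.injective (shf_inj m n) h']
  · intro h
    exact Or.inr (Or.inr ⟨e, h, rfl⟩)

lemma ext_res {m n : ℕ} {Q : Finset (Sym2 (Fin m × Fin (2 + n + 2)))}
    (hQ : IsPM (negGrid m (2 + n)) Q) : ext' m n (res m n Q) = Q := by
  ext e
  simp only [res, ext', Finset.mem_filter, Finset.mem_univ, true_and]
  constructor
  · rintro (⟨i, rfl⟩ | ⟨i, rfl⟩ | ⟨e', h, rfl⟩)
    · exact lE_mem hQ i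
    · exact rE_mem hQ i
    · exact h
  · intro h
    rcases classify hQ h with h' | h' | ⟨e', rfl⟩
    · exact Or.inl h'
    · exact Or.inr (Or.inl h')
    · exact Or.inr (Or.inr ⟨e', h, rfl⟩)

lemma mem_map_iff {m n : ℕ} (e : Sym2 (Fin m × Fin n)) (v) :
    shf m n v ∈ Sym2.map (shf m n) e ↔ v ∈ e := by
  rw [Sym2.mem_map]
  constructor
  · rintro ⟨a, ha, h⟩
    rwa [← shf_inj m n h]
  · intro h; exact ⟨v, h, rfl⟩

lemma res_pm {m n : ℕ} {Q : Finset (Sym2 (Fin m × Fin (2 + n + 2)))}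
    (hQ : IsPM (negGrid m (2 + n)) Q) : IsPM (grid m n) (res m n Q) := by
  simp only [IsPM, res, Finset.mem_filter, Finset.mem_univ, true_and]
  refine ⟨fun e he => (map_edge e).1 (hQ.1 _ he), fun v => ?_⟩
  obtain ⟨e, ⟨he, hv⟩, hu⟩ := hQ.2 (shf m n v)
  rcases classify hQ he with ⟨i, rfl⟩ | ⟨i, rfl⟩ | ⟨e', rfl⟩
  · rw [mem_lE] at hv
    simp [shf] at hv
  · rw [mem_rE] at hv
    simp only [shf] at hv
    omega
  · refine ⟨e', ⟨he, (mem_map_iff _ _).1 hv⟩, ?_⟩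
    rintro f ⟨hf, hvf⟩
    exact Sym2.map.injective (shf_inj m n) (hu _ ⟨hf, (mem_map_iff _ _).2 hvf⟩)

lemma ext_pm {m n : ℕ} {P : Finset (Sym2 (Fin m × Fin n))}
    (hP : IsPM (grid m n) P) : IsPM (negGrid m (2 + n)) (ext' m n P) := by
  simp only [IsPM, ext', Finset.mem_filter, Finset.mem_univ, true_and]
  constructor
  · rintro e (⟨i, rfl⟩ | ⟨i, rfl⟩ | ⟨e', h, rfl⟩)
    · rw [lE, SimpleGraph.mem_edgeSet, negAdj]; simp
    · rw [rE, SimpleGraph.mem_edgeSet, negAdj]; simp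
    · exact (map_edge e').2 (hP.1 _ h)
  · intro v
    by_cases h1 : (v.2 : ℕ) ≤ 1
    · refine ⟨lE m n v.1, ⟨Or.inl ⟨_, rfl⟩, mem_lE.2 ⟨rfl, h1⟩⟩, ?_⟩
      rintro e ⟨⟨i, rfl⟩ | ⟨i, rfl⟩ | ⟨e', h, rfl⟩, hv⟩
      · rw [(mem_lE.1 hv).1]
      · have := (mem_rE.1 hv).2; omega
      · have := mem_map_shf hv; omega
    by_cases h2 : n + 2 ≤ (v.2 : ℕ)
    · refine ⟨rE m n v.1, ⟨Or.inr (Or.inl ⟨_, rfl⟩), mem_rE.2 ⟨rfl, h2⟩⟩, ?_⟩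
      rintro e ⟨⟨i, rfl⟩ | ⟨i, rfl⟩ | ⟨e', h, rfl⟩, hv⟩
      · have := (mem_lE.1 hv).2; omega
      · rw [(mem_rE.1 hv).1]
      · have := mem_map_shf hv; omega
    obtain ⟨w, rfl⟩ := shf_surj v (by omega) (by omega)
    obtain ⟨e, ⟨he, hw⟩, hu⟩ := hP.2 w
    refine ⟨Sym2.map (shf m n) e, ⟨Or.inr (Or.inr ⟨e, he, rfl⟩), (mem_map_iff _ _).2 hw⟩, ?_⟩
    rintro f ⟨⟨i, rfl⟩ | ⟨i, rfl⟩ | ⟨e', h, rfl⟩, hv⟩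
    · exact (h1 (mem_lE.1 hv).2).elim
    · exact (h2 (mem_rE.1 hv).2).elim
    · rw [hu e' ⟨h, (mem_map_iff _ _).1 hv⟩]

lemma card_eq (m n : ℕ) : (pmFinset (negGrid m (2 + n))).card = T m n := by
  classical
  have hT : T m n = (pmFinset (grid m n)).card := by
    rw [T, ← Set.ncard_coe_finset]
    congr 1
    ext P
    simp [pmFinset]
  rw [hT]
  refine Finset.card_nbij' (res m n) (ext' m n) ?_ ?_ ?_ ?_
  · intro Q hQ
    simp only [pmFinset, Finset.coe_filter, Finset.mem_univ, true_and, Set.mem_setOf_eq] at hQ ⊢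
    exact res_pm hQ
  · intro Q hQ
    simp only [pmFinset, Finset.coe_filter, Finset.mem_univ, true_and, Set.mem_setOf_eq] at hQ ⊢
    exact ext_pm hQ
  · intro Q hQ
    simp only [pmFinset, Finset.coe_filter, Finset.mem_univ, true_and, Set.mem_setOf_eq] at hQ
    exact ext_res hQ
  · intro P _
    exact res_ext m n P

lemma sign_eq {m n : ℕ} {Q : Finset (Sym2 (Fin m × Fin (2 + n + 2)))}
    (hQ : IsPM (negGrid m (2 + n)) Q) : (-1 : ℤ) ^ vert Q = eps m n := by
  obtain ⟨h1, h2⟩ := parity (negGrid m (2 + n)) (by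
    intro p q h
    rw [negAdj] at h
    rw [Fin.ext_iff]
    omega) Q hQ
  rw [ZMod.natCast_eq_natCast_iff] at h2
  have h3 : Even (vert Q) ↔ Even ((2 + n + 2) * (m * (m - 1) / 2)) := by
    rw [Nat.even_iff, Nat.even_iff, h2]
  unfold eps
  rcases Nat.even_or_odd n with hn | hn
  · rw [if_neg (by rintro ⟨-, h⟩; exact (Nat.not_even_iff_odd.2 h) hn)]
    apply Even.neg_one_pow
    rw [h3]
    apply Even.mul_right
    rw [Nat.even_iff] at *
    omega
  · have ho : Odd (2 + n + 2) := by rw [Nat.odd_iff] at *; omega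
    have hm : Even m := by
      rcases Nat.even_mul.1 h1 with h | h
      · exact h
      · exact ((Nat.not_even_iff_odd.2 ho) h).elim
    obtain ⟨c, rfl⟩ := hm
    have hc : (c + c) * (c + c - 1) / 2 = c * (c + c - 1) := by
      rw [show (c + c) * (c + c - 1) = 2 * (c * (c + c - 1)) by ring]
      simp
    have h4 : Even (vert Q) ↔ Even c := by
      rw [h3, hc, Nat.even_mul, Nat.even_mul]
      have := Nat.not_even_iff_odd.2 ho
      simp only [Nat.even_iff] at *
      omega
    rcases Nat.even_or_odd c with hc | hc
    · rw [if_neg (by rw [Nat.even_iff] at hc; omega), Even.neg_one_pow (h4.2 hc)]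
    · rw [if_pos ⟨by rw [Nat.odd_iff] at hc; omega, hn⟩, Odd.neg_one_pow]
      rw [← Nat.not_even_iff_odd, h4, Nat.not_even_iff_odd]
      exact hc

/-- The extrapolated tiling count T(m,−2−n) equals the signed matching count of
`G(m,-(2+n))`, and the reciprocity relation holds. -/
theorem signed_matchings_give_reciprocity (m n : ℕ) (hm : 1 ≤ m) :
    Msigned m (2 + n) = eps m n * (T m n : ℤ) := by
  rw [Msigned, ← card_eq, Finset.sum_congr rfl (fun Q hQ => sign_eq (by
    simpa [pmFinset] using hQ)), Finset.sum_const, nsmul_eq_mul, mul_comm]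
end
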